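/- There is a short exact sequence of abelian groups 0 → ℤ/n → H²(V_n'; ℤ) → ℤ/n → 0, where H²(V_n'; ℤ) is the second group cohomology of V_n' with coefficients in the trivial module ℤ. Equivalently, there exists a subgroup S of H²(V_n'; ℤ) with S ≅ ℤ/n and H²(V_n'; ℤ)/S ≅ ℤ/n. -/

import Mathlib

/-!
The commutator of `α'` and `β'` is the scalar matrix `ζ⁻¹`: it is central of order `n`, while
`α'ⁿ = β'ⁿ = 1`. Hence `V = V_n'` is finite with abelianization `(ℤ/n)²`, and the short exact
sequence is the split one, because `H²(V; ℤ) ≅ Hom(V, ℂˣ) ≅ Vᵃᵇ`. The first isomorphism is the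
inverse of the connecting map of `0 → ℤ → ℂ → ℂˣ → 0`: an integral 2-cocycle `c` has a unique
complex primitive, namely its mean `x ↦ (∑_w c(x, w)) / |V|`, and the exponential of `2πi` times
this mean is a character, which is trivial exactly when the mean is integral.
-/

open Matrix Complex

/-- `ζ = exp(2πi/n)`. -/
noncomputable def zetaC (n : ℕ) : ℂ := Complex.exp (2 * Real.pi * Complex.I / n)

/-- The cyclic permutation matrix `α'`, with `α'_{ij} = 1` iff `i ≡ j + 1 (mod n)`. -/
noncomputable def alphaM (n : ℕ) : Matrix (Fin n) (Fin n) ℂ :=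
  fun i j => if (i : ℕ) = ((j : ℕ) + 1) % n then 1 else 0

/-- The diagonal matrix `β' = diag(ζ, ζ², …, ζ^{n−1}, 1)`. -/
noncomputable def betaM (n : ℕ) : Matrix (Fin n) (Fin n) ℂ :=
  Matrix.diagonal fun i => zetaC n ^ ((i : ℕ) + 1)

/-- `α'` as an element of the unitary group. -/
noncomputable def aU (n : ℕ) (hA : alphaM n ∈ Matrix.unitaryGroup (Fin n) ℂ) :
    Matrix.unitaryGroup (Fin n) ℂ := ⟨alphaM n, hA⟩

/-- `β'` as an element of the unitary group. -/
noncomputable def bU (n : ℕ) (hB : betaM n ∈ Matrix.unitaryGroup (Fin n) ℂ) :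
    Matrix.unitaryGroup (Fin n) ℂ := ⟨betaM n, hB⟩

/-- The scalar matrix `ζ·I` as an element of the unitary group. -/
noncomputable def sU (n : ℕ)
    (hS : zetaC n • (1 : Matrix (Fin n) (Fin n) ℂ) ∈ Matrix.unitaryGroup (Fin n) ℂ) :
    Matrix.unitaryGroup (Fin n) ℂ := ⟨zetaC n • (1 : Matrix (Fin n) (Fin n) ℂ), hS⟩

/-- `V_n'`, the subgroup of `U_n` generated by `α'` and `β'`. -/
noncomputable def Vgrp (n : ℕ) (hA : alphaM n ∈ Matrix.unitaryGroup (Fin n) ℂ)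
    (hB : betaM n ∈ Matrix.unitaryGroup (Fin n) ℂ) :
    Subgroup (Matrix.unitaryGroup (Fin n) ℂ) :=
  Subgroup.closure {aU n hA, bU n hB}

/-- `W_n`, the subgroup of `U_n` generated by `β'` and the scalar matrix `ζ·I`. -/
noncomputable def Wgrp (n : ℕ) (hB : betaM n ∈ Matrix.unitaryGroup (Fin n) ℂ)
    (hS : zetaC n • (1 : Matrix (Fin n) (Fin n) ℂ) ∈ Matrix.unitaryGroup (Fin n) ℂ) :
    Subgroup (Matrix.unitaryGroup (Fin n) ℂ) :=
  Subgroup.closure {bU n hB, sU n hS}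

section CentralCommutator

open Subgroup
open scoped commutatorElement

variable {G : Type*} [Group G] {a b : G} {n : ℕ}

theorem commutatorElement_zpow_left (hz : ⁅a, b⁆ ∈ center G) (k : ℤ) :
    ⁅a ^ k, b⁆ = ⁅a, b⁆ ^ k := by
  have hcomm : Commute a (b * a⁻¹ * b⁻¹) := by
    have h : b * a⁻¹ * b⁻¹ = a⁻¹ * ⁅a, b⁆ := by rw [commutatorElement_def]; group
    exact h ▸ (Commute.refl a).inv_right.mul_right (mem_center_iff.mp hz a)
  calc ⁅a ^ k, b⁆ = a ^ k * (b * a⁻¹ * b⁻¹) ^ k := by rw [conj_zpow, commutatorElement_def]; group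
    _ = ⁅a, b⁆ ^ k := by rw [← hcomm.mul_zpow, commutatorElement_def]; group

theorem commutatorElement_zpow_eq_one_of_zpow_mul_zpow_mem_center (hz : ⁅a, b⁆ ∈ center G)
    {k l : ℤ} (h : a ^ k * b ^ l ∈ center G) : ⁅a, b⁆ ^ k = 1 ∧ ⁅a, b⁆ ^ l = 1 := by
  rw [mem_center_iff] at h
  have hak : Commute (a ^ k) b := by
    simpa using Commute.mul_left (h b).symm ((Commute.refl b).zpow_left (-l))
  have hbl : Commute (b ^ l) a := by
    simpa using Commute.mul_left ((Commute.refl a).zpow_left (-k)) (h a).symm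
  refine ⟨?_, ?_⟩
  · rw [← commutatorElement_zpow_left hz, commutatorElement_eq_one_iff_commute.mpr hak]
  · have hz' : ⁅b, a⁆ ∈ center G := commutatorElement_inv a b ▸ inv_mem hz
    rw [← inv_eq_one, ← _root_.inv_zpow, commutatorElement_inv, ← commutatorElement_zpow_left hz',
      commutatorElement_eq_one_iff_commute.mpr hbl]

theorem commutator_le_zpowers_commutatorElement (hab : closure {a, b} = ⊤)
    (hz : ⁅a, b⁆ ∈ center G) : commutator G ≤ zpowers ⁅a, b⁆ := by
  have hnormal : (zpowers ⁅a, b⁆).Normal := by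
    refine ⟨fun x hx g => ?_⟩
    rw [mem_center_iff.mp (zpowers_le.mpr hz hx) g, mul_inv_cancel_right]
    exact hx
  let π := QuotientGroup.mk' (zpowers ⁅a, b⁆)
  have hπ : Commute (π a) (π b) := by
    rw [← commutatorElement_eq_one_iff_commute, ← map_commutatorElement]
    exact (QuotientGroup.eq_one_iff _).mpr (mem_zpowers _)
  have hgen : closure (π '' {a, b}) = ⊤ := by
    rw [← MonoidHom.map_closure, hab, map_top_of_surjective _ (QuotientGroup.mk'_surjective _)]
  have hcomm : IsMulCommutative (closure (π '' {a, b})) := isMulCommutative_closure <| by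
    rintro _ ⟨x, rfl | rfl, rfl⟩ _ ⟨y, rfl | rfl, rfl⟩
    exacts [rfl, hπ, hπ.symm, rfl]
  rw [← Normal.quotient_commutative_iff_commutator_le]
  rw [hgen] at hcomm
  exact ⟨⟨fun x y => setLike_mul_comm (mem_top x) (mem_top y)⟩⟩

theorem exists_abelianization_of_zpow_mul_zpow_eq (hab : closure {a, b} = ⊤)
    (x : Abelianization G) : ∃ k l : ℤ, Abelianization.of (a ^ k * b ^ l) = x := by
  have h : x ∈ (closure {a, b}).map Abelianization.of := hab ▸ ⟨x.out, trivial, x.out_eq⟩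
  rw [MonoidHom.map_closure, Set.image_pair, mem_closure_pair] at h
  simpa only [map_mul, map_zpow] using h

theorem nonempty_abelianization_addEquiv_zmod_prod (hab : closure {a, b} = ⊤)
    (hz : ⁅a, b⁆ ∈ center G) (hn : orderOf ⁅a, b⁆ = n) (ha : a ^ n = 1) (hb : b ^ n = 1) :
    Nonempty (Additive (Abelianization G) ≃+ ZMod n × ZMod n) := by
  let lift (x : G) (hx : x ^ n = 1) : ZMod n →+ Additive (Abelianization G) :=
    ZMod.lift n ⟨zmultiplesHom _ (.ofMul (.of x)), by simp [← ofMul_pow, ← map_pow, hx]⟩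
  let f := (lift a ha).coprod (lift b hb)
  have hf (k l : ℤ) : f (k, l) = .ofMul (.of (a ^ k * b ^ l)) := by simp [f, lift]
  have hinj : Function.Injective f := by
    rw [injective_iff_map_eq_zero]
    rintro ⟨i, j⟩ hij
    obtain ⟨k, rfl⟩ := ZMod.intCast_surjective i
    obtain ⟨l, rfl⟩ := ZMod.intCast_surjective j
    have hmem : a ^ k * b ^ l ∈ commutator G := by
      rw [← Abelianization.ker_of]
      exact (hf k l).symm.trans hij
    have hcenter := zpowers_le.mpr hz (commutator_le_zpowers_commutatorElement hab hz hmem)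
    obtain ⟨hk, hl⟩ := commutatorElement_zpow_eq_one_of_zpow_mul_zpow_mem_center hz hcenter
    rw [← orderOf_dvd_iff_zpow_eq_one, hn, ← ZMod.intCast_zmod_eq_zero_iff_dvd] at hk hl
    exact Prod.ext hk hl
  have hsurj : Function.Surjective f := fun x => by
    obtain ⟨k, l, hkl⟩ := exists_abelianization_of_zpow_mul_zpow_eq hab x.toMul
    exact ⟨(k, l), (hf k l).trans hkl⟩
  exact ⟨(AddEquiv.ofBijective f ⟨hinj, hsurj⟩).symm⟩

theorem finite_of_commutatorElement_mem_center [NeZero n] (hab : closure {a, b} = ⊤)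
    (hz : ⁅a, b⁆ ∈ center G) (hn : orderOf ⁅a, b⁆ = n) (ha : a ^ n = 1) (hb : b ^ n = 1) :
    Finite G := by
  obtain ⟨e⟩ := nonempty_abelianization_addEquiv_zmod_prod hab hz hn ha hb
  have hquot : Finite (G ⧸ commutator G) := .of_equiv _ (e.symm.toEquiv.trans Additive.toMul)
  have hfin : (zpowers ⁅a, b⁆ : Set G).Finite :=
    finite_zpowers.mpr (orderOf_ne_zero_iff.mp (hn ▸ NeZero.ne n))
  have hcomm : Finite (commutator G) :=
    hfin.subset (commutator_le_zpowers_commutatorElement hab hz)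
  exact .of_subgroup_quotient (commutator G)

end CentralCommutator

section Cocycles

open groupCohomology

universe u v

variable {k G : Type u} [CommRing k] [Group G]

theorem d₁₂_sum_cocycle_snd [Fintype G] {A : Rep.{v} k G} (c : cocycles₂ A) :
    d₁₂ A (fun x => ∑ w, c (x, w)) = Fintype.card G • ⇑c := by
  ext ⟨x, y⟩
  have hsum : ∑ w, (c (x * y, w) + c (x, y)) = ∑ w, (A.ρ x (c (y, w)) + c (x, y * w)) :=
    Finset.sum_congr rfl fun w _ => (mem_cocycles₂_iff _).mp c.2 x y w
  have hshift : ∑ w, c (x, y * w) = ∑ w, c (x, w) :=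
    Fintype.sum_equiv (Equiv.mulLeft y) _ _ fun _ => rfl
  simp only [Finset.sum_add_distrib, hshift, Finset.sum_const, Finset.card_univ] at hsum
  simp only [d₁₂_hom_apply, Pi.smul_apply, map_sum]
  rw [sub_add_eq_add_sub, ← hsum, add_sub_cancel_left]

theorem mem_coboundaries₂_trivial_iff {V : Type v} [AddCommGroup V] [Module k V] {f : G × G → V} :
    f ∈ coboundaries₂ (Rep.trivial k G V) ↔
      ∃ h : G → V, ∀ x y, f (x, y) = h x + h y - h (x * y) := by
  have hd (h : G → V) (x y : G) :
      d₁₂ (Rep.trivial k G V) h (x, y) = h x + h y - h (x * y) := by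
    simp [d₁₂_hom_apply]
    abel
  refine exists_congr fun h => ⟨?_, fun hf => ?_⟩
  · rintro rfl x y
    exact hd h x y
  · ext ⟨x, y⟩
    exact (hd h x y).trans (hf x y).symm

end Cocycles

section CocycleMean

open groupCohomology

variable {G : Type} [Group G] [Fintype G] {K : Type*} [Field K]

variable (K) in
/-- The mean of an integral 2-cocycle in its second variable. In characteristic zero it is the
unique `K`-valued 1-cochain with coboundary `c`; see `cocycleMean_mul` and `eq_cocycleMean`. -/
def cocycleMean (c : cocycles₂ (Rep.trivial ℤ G ℤ)) (x : G) : K :=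
  (∑ w, c (x, w) : ℤ) / Fintype.card G

theorem cocycleMean_add (c d : cocycles₂ (Rep.trivial ℤ G ℤ)) (x : G) :
    cocycleMean K (c + d) x = cocycleMean K c x + cocycleMean K d x := by
  have hadd (p : G × G) : ((c + d) p : ℤ) = c p + d p := rfl
  simp [cocycleMean, hadd, Finset.sum_add_distrib, add_div]

variable [CharZero K]

theorem cocycleMean_mul (c : cocycles₂ (Rep.trivial ℤ G ℤ)) (x y : G) :
    cocycleMean K c (x * y) = cocycleMean K c x + cocycleMean K c y - (c (x, y) : ℤ) := by
  have h : ((∑ w, c (y, w) - ∑ w, c (x * y, w) + ∑ w, c (x, w) : ℤ) : K) =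
      (Fintype.card G * c (x, y) : ℤ) := by
    simpa [d₁₂_hom_apply] using
      congrArg (Int.cast (R := K)) (congrFun (d₁₂_sum_cocycle_snd c) (x, y))
  push_cast at h
  simp only [cocycleMean]
  field_simp
  push_cast
  linear_combination -h

theorem eq_cocycleMean {c : cocycles₂ (Rep.trivial ℤ G ℤ)} {h : G → K}
    (hc : ∀ x y, ((c (x, y) : ℤ) : K) = h x + h y - h (x * y)) : cocycleMean K c = h := by
  ext x
  have hshift : ∑ w, h (x * w) = ∑ w, h w :=
    Fintype.sum_equiv (Equiv.mulLeft x) _ _ fun _ => rfl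
  simp [cocycleMean, hc, Finset.sum_add_distrib, hshift]

end CocycleMean

section ExpTwoPiI

/-- The exponential `z ↦ exp (2πiz)`, as the surjection of the exponential sequence
`0 → ℤ → ℂ → ℂˣ → 0`. -/
noncomputable def expTwoPiI : ℂ →+ Additive ℂˣ :=
  expMonoidHom.toHomUnits.toAdditiveRight.comp (AddMonoidHom.mulLeft (2 * Real.pi * I))

theorem coe_expTwoPiI (z : ℂ) : ((expTwoPiI z).toMul : ℂ) = exp (2 * Real.pi * I * z) := rfl

theorem expTwoPiI_eq_zero_iff {z : ℂ} : expTwoPiI z = 0 ↔ ∃ m : ℤ, z = m := by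
  rw [← toMul_eq_one, ← Units.val_eq_one, coe_expTwoPiI, exp_eq_one_iff]
  simp only [mul_comm _ (2 * Real.pi * I : ℂ), mul_right_inj' two_pi_I_ne_zero]

theorem expTwoPiI_surjective : Function.Surjective expTwoPiI := by
  intro u
  refine ⟨log u.toMul / (2 * Real.pi * I), Additive.toMul.injective (Units.ext ?_)⟩
  rw [coe_expTwoPiI, mul_div_cancel₀ _ two_pi_I_ne_zero, exp_log u.toMul.ne_zero]

end ExpTwoPiI

section CocycleCharacter

open groupCohomology

variable {G : Type} [Group G] [Fintype G]

/-- The character `x ↦ exp (2πi · cocycleMean ℂ c x)` attached to an integral 2-cocycle `c`. It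
inverts, on cocycles, the connecting map `Hom(G, ℂˣ) → H²(G; ℤ)` of the exponential sequence. -/
noncomputable def cocycleCharacter : cocycles₂ (Rep.trivial ℤ G ℤ) →+ Additive (G →* ℂˣ) :=
  AddMonoidHom.mk'
    (fun c => Additive.ofMul <|
      MonoidHom.mk' (fun x => (expTwoPiI (cocycleMean ℂ c x)).toMul) fun x y => by
        rw [cocycleMean_mul, map_sub, expTwoPiI_eq_zero_iff.mpr ⟨_, rfl⟩, sub_zero, map_add,
          toMul_add])
    fun c d => Additive.toMul.injective <| MonoidHom.ext fun x => by simp [cocycleMean_add]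

theorem cocycleCharacter_apply (c : cocycles₂ (Rep.trivial ℤ G ℤ)) (x : G) :
    (cocycleCharacter c).toMul x = (expTwoPiI (cocycleMean ℂ c x)).toMul := rfl

theorem cocycleCharacter_eq_zero_iff {c : cocycles₂ (Rep.trivial ℤ G ℤ)} :
    cocycleCharacter c = 0 ↔ ⇑c ∈ coboundaries₂ (Rep.trivial ℤ G ℤ) := by
  have hint : cocycleCharacter c = 0 ↔ ∀ x, ∃ m : ℤ, cocycleMean ℂ c x = m := by
    simp only [← expTwoPiI_eq_zero_iff, ← toMul_eq_one, MonoidHom.ext_iff, cocycleCharacter_apply,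
      MonoidHom.one_apply]
  rw [hint, mem_coboundaries₂_trivial_iff]
  constructor
  · intro h
    choose m hm using h
    refine ⟨m, fun x y => Int.cast_injective (α := ℂ) ?_⟩
    have hmul := cocycleMean_mul (K := ℂ) c x y
    rw [hm, hm, hm] at hmul
    push_cast
    linear_combination hmul
  · rintro ⟨m, hm⟩ x
    exact ⟨m x, congrFun (eq_cocycleMean (h := fun x => (m x : ℂ)) fun x y => by simp [hm]) x⟩

theorem cocycleCharacter_surjective : Function.Surjective (cocycleCharacter (G := G)) := by
  intro χ
  choose h hχ using fun x => expTwoPiI_surjective (.ofMul (χ.toMul x))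
  have hint (p : G × G) : ∃ m : ℤ, h p.1 + h p.2 - h (p.1 * p.2) = m := by
    rw [← expTwoPiI_eq_zero_iff]
    simp [hχ]
  choose c hc using hint
  have hmem : c ∈ cocycles₂ (Rep.trivial ℤ G ℤ) := by
    refine (mem_cocycles₂_iff _).mpr fun x y w => ?_
    change c (x * y, w) + c (x, y) = c (y, w) + c (x, y * w)
    apply Int.cast_injective (α := ℂ)
    simp only [Int.cast_add, ← hc, mul_assoc]
    ring
  refine ⟨⟨c, hmem⟩, Additive.toMul.injective (MonoidHom.ext fun x => ?_)⟩
  rw [cocycleCharacter_apply, eq_cocycleMean fun x y => (hc (x, y)).symm, hχ, toMul_ofMul]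

end CocycleCharacter

section H2

open groupCohomology Subgroup
open scoped commutatorElement

theorem nonempty_addEquiv_of_ker_eq {A B C : Type*} [AddGroup A] [AddGroup B] [AddGroup C]
    {f : A →+ B} {g : A →+ C} (hf : Function.Surjective f) (hg : Function.Surjective g)
    (h : f.ker = g.ker) : Nonempty (B ≃+ C) :=
  ⟨(QuotientAddGroup.quotientKerEquivOfSurjective f hf).symm.trans <|
    (QuotientAddGroup.quotientAddEquivOfEq h).trans
      (QuotientAddGroup.quotientKerEquivOfSurjective g hg)⟩

theorem nonempty_H2_addEquiv_monoidHom_units (G : Type) [Group G] [Finite G] :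
    Nonempty (groupCohomology (Rep.trivial ℤ G ℤ) 2 ≃+ Additive (G →* ℂˣ)) := by
  have := Fintype.ofFinite G
  let π := (H2π (Rep.trivial ℤ G ℤ)).hom.toAddMonoidHom
  have hπ : Function.Surjective π := (ModuleCat.epi_iff_surjective _).mp inferInstance
  refine nonempty_addEquiv_of_ker_eq hπ cocycleCharacter_surjective (AddSubgroup.ext fun c => ?_)
  exact (H2π_eq_zero_iff c).trans cocycleCharacter_eq_zero_iff.symm

theorem nonempty_H2_addEquiv_abelianization (G : Type) [Group G] [Finite G] :
    Nonempty (groupCohomology (Rep.trivial ℤ G ℤ) 2 ≃+ Additive (Abelianization G)) := by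
  obtain ⟨e⟩ := nonempty_H2_addEquiv_monoidHom_units G
  obtain ⟨dual⟩ := CommGroup.monoidHom_mulEquiv_of_hasEnoughRootsOfUnity (Abelianization G) ℂ
  let lift : (G →* ℂˣ) ≃* (Abelianization G →* ℂˣ) :=
    MulEquiv.mk' Abelianization.lift fun χ ψ => by ext; simp
  exact ⟨e.trans (MulEquiv.toAdditive (G := G →* ℂˣ) (lift.trans dual))⟩

theorem nonempty_H2_closure_pair_addEquiv_zmod_prod {G : Type} [Group G] {a b : G} {n : ℕ}
    [NeZero n] (hz : ⁅a, b⁆ ∈ center G) (hn : orderOf ⁅a, b⁆ = n) (ha : a ^ n = 1)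
    (hb : b ^ n = 1) :
    Nonempty (groupCohomology (Rep.trivial ℤ (closure {a, b}) ℤ) 2 ≃+ ZMod n × ZMod n) := by
  let a' : closure {a, b} := ⟨a, subset_closure (by simp)⟩
  let b' : closure {a, b} := ⟨b, subset_closure (by simp)⟩
  have hgen : closure {a', b'} = ⊤ := by
    rw [← closure_closure_coe_preimage (k := {a, b})]
    congr 1
    ext x
    simp [a', b', Subtype.ext_iff]
  have hz' : ⁅a', b'⁆ ∈ center (closure {a, b}) :=
    mem_center_iff.mpr fun g => Subtype.ext (mem_center_iff.mp hz g)
  have hn' : orderOf ⁅a', b'⁆ = n := (Subgroup.orderOf_coe _).symm.trans hn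
  have ha' : a' ^ n = 1 := Subtype.ext ha
  have hb' : b' ^ n = 1 := Subtype.ext hb
  have hfin := finite_of_commutatorElement_mem_center hgen hz' hn' ha' hb'
  obtain ⟨e⟩ := nonempty_H2_addEquiv_abelianization (closure {a, b})
  obtain ⟨d⟩ := nonempty_abelianization_addEquiv_zmod_prod hgen hz' hn' ha' hb'
  exact ⟨e.trans d⟩

end H2

section ClockShift

open scoped commutatorElement

variable {n : ℕ}

theorem isPrimitiveRoot_zetaC [NeZero n] : IsPrimitiveRoot (zetaC n) n :=
  Complex.isPrimitiveRoot_exp n (NeZero.ne n)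

theorem alphaM_pow_apply (k : ℕ) (i j : Fin n) :
    (alphaM n ^ k) i j = if (i : ℕ) = (j + k) % n then 1 else 0 := by
  induction k generalizing i with
  | zero => simp [Matrix.one_apply, Nat.mod_eq_of_lt j.2, Fin.ext_iff]
  | succ k ih =>
    let j' : Fin n := ⟨(j + k) % n, Nat.mod_lt _ j.pos⟩
    have hj' (l : Fin n) : (alphaM n ^ k) l j = if l = j' then 1 else 0 := by
      simp only [ih, Fin.ext_iff, j']
    simp [pow_succ', Matrix.mul_apply, hj', alphaM, j', add_assoc]

theorem alphaM_pow_self : alphaM n ^ n = 1 := by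
  ext i j
  simp [alphaM_pow_apply, Matrix.one_apply, Nat.mod_eq_of_lt j.2, Fin.ext_iff]

theorem sU_mem_center
    (hS : zetaC n • (1 : Matrix (Fin n) (Fin n) ℂ) ∈ Matrix.unitaryGroup (Fin n) ℂ) :
    sU n hS ∈ Subgroup.center (Matrix.unitaryGroup (Fin n) ℂ) :=
  Subgroup.mem_center_iff.mpr fun g => Subtype.ext (by simp [sU])

variable [NeZero n]

theorem betaM_pow_self : betaM n ^ n = 1 := by
  rw [betaM, Matrix.diagonal_pow, ← Matrix.diagonal_one]
  congr 1
  ext i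
  rw [Pi.pow_apply, pow_right_comm, isPrimitiveRoot_zetaC.pow_eq_one, one_pow]

theorem betaM_mul_alphaM : betaM n * alphaM n = zetaC n • (alphaM n * betaM n) := by
  ext i j
  rw [betaM, Matrix.diagonal_mul, Matrix.smul_apply, Matrix.mul_diagonal, alphaM]
  split_ifs with h
  · have hpow : zetaC n ^ (i : ℕ) = zetaC n ^ ((j : ℕ) + 1) := by
      rw [h, ← pow_eq_pow_mod _ isPrimitiveRoot_zetaC.pow_eq_one]
    rw [pow_succ, hpow, mul_one, one_mul, smul_eq_mul, mul_comm]
  · simp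

theorem zetaC_smul_one_mem_unitaryGroup :
    zetaC n • (1 : Matrix (Fin n) (Fin n) ℂ) ∈ Matrix.unitaryGroup (Fin n) ℂ := by
  have h : ‖zetaC n‖ = 1 := isPrimitiveRoot_zetaC.norm'_eq_one (NeZero.ne n)
  rw [Matrix.mem_unitaryGroup_iff, star_smul, star_one, smul_mul_smul_comm, one_mul]
  simp [Complex.mul_conj, Complex.normSq_eq_norm_sq, h]

variable (hA : alphaM n ∈ Matrix.unitaryGroup (Fin n) ℂ)
  (hB : betaM n ∈ Matrix.unitaryGroup (Fin n) ℂ)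
  (hS : zetaC n • (1 : Matrix (Fin n) (Fin n) ℂ) ∈ Matrix.unitaryGroup (Fin n) ℂ)

theorem orderOf_sU : orderOf (sU n hS) = n := by
  have hpow (k : ℕ) : sU n hS ^ k = 1 ↔ zetaC n ^ k = 1 := by
    rw [Subtype.ext_iff]
    simp only [sU, SubmonoidClass.mk_pow, smul_pow, one_pow, OneMemClass.coe_one]
    refine ⟨fun h => ?_, fun h => by rw [h, one_smul]⟩
    simpa using congrFun (congrFun h 0) 0
  exact (orderOf_eq_orderOf_iff.mpr hpow).trans isPrimitiveRoot_zetaC.eq_orderOf.symm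

theorem commutatorElement_aU_bU : ⁅aU n hA, bU n hB⁆ = (sU n hS)⁻¹ := by
  have hba : bU n hB * aU n hA = sU n hS * (aU n hA * bU n hB) :=
    Subtype.ext (by simpa [aU, bU, sU] using betaM_mul_alphaM)
  have hcomm : ⁅bU n hB, aU n hA⁆ = sU n hS := by
    rw [commutatorElement_def, hba]
    group
  rw [← hcomm, commutatorElement_inv]

theorem nonempty_H2_Vgrp_addEquiv :
    Nonempty (groupCohomology (Rep.trivial ℤ (Vgrp n hA hB) ℤ) 2 ≃+ ZMod n × ZMod n) := by
  have hS : zetaC n • (1 : Matrix (Fin n) (Fin n) ℂ) ∈ _ := zetaC_smul_one_mem_unitaryGroup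
  have hcomm := commutatorElement_aU_bU hA hB hS
  apply nonempty_H2_closure_pair_addEquiv_zmod_prod
  · exact hcomm ▸ inv_mem (sU_mem_center hS)
  · rw [hcomm, orderOf_inv, orderOf_sU]
  · exact Subtype.ext alphaM_pow_self
  · exact Subtype.ext betaM_pow_self

end ClockShift

theorem exists_injective_surjective_range_eq_ker {M A B : Type*} [AddGroup M] [AddGroup A]
    [AddGroup B] (e : M ≃+ A × B) :
    ∃ (f : A →+ M) (g : M →+ B),
      Function.Injective f ∧ Function.Surjective g ∧ f.range = g.ker := by
  refine ⟨e.symm.toAddMonoidHom.comp (AddMonoidHom.inl A B),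
    (AddMonoidHom.snd A B).comp e.toAddMonoidHom,
    e.symm.injective.comp (Prod.mk_left_injective 0), Prod.snd_surjective.comp e.surjective, ?_⟩
  ext x
  constructor
  · rintro ⟨s, rfl⟩
    exact congrArg Prod.snd (e.apply_symm_apply (s, 0))
  · intro hx
    exact ⟨(e x).1, e.symm_apply_eq.mpr (Prod.ext rfl (Eq.symm hx))⟩

/-- there is a short exact sequence of abelian groups
`0 → ℤ/n → H²(V_n'; ℤ) → ℤ/n → 0`, where `H²(V_n'; ℤ)` is the second group cohomology of
`V_n'` with coefficients in the trivial module `ℤ`. -/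
theorem H2_Vgrp_ses (n : ℕ) (hn : 1 < n)
    (hA : alphaM n ∈ Matrix.unitaryGroup (Fin n) ℂ)
    (hB : betaM n ∈ Matrix.unitaryGroup (Fin n) ℂ) :
    ∃ (f : ZMod n →+ (groupCohomology (Rep.trivial ℤ (Vgrp n hA hB) ℤ) 2))
      (g : (groupCohomology (Rep.trivial ℤ (Vgrp n hA hB) ℤ) 2) →+ ZMod n),
      Function.Injective f ∧ Function.Surjective g ∧
      f.range = g.ker := by
  have : NeZero n := ⟨by lia⟩
  obtain ⟨e⟩ := nonempty_H2_Vgrp_addEquiv hA hB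
  exact exists_injective_surjective_range_eq_ker e
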